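/- arXiv:2407.08184 — 2 statements merged into one kernel-verified Lean document; each statement's English description precedes it below -/
import Mathlib

section
/- In ℝ², let D > 0, let a ∈ (0, π/2) and γ ∈ [0, π/2) satisfy a + γ < π/2, let C = (0, D), and let L = {(x, −x·tan γ) : x ∈ ℝ} be the seabed line through the origin. Let T be the intersection point of L with the ray from C in direction (sin a, −cos a), and U the intersection point of L with the ray from C in direction (−sin a, −cos a). Then T and U exist and are unique, and ‖T − U‖ = D·sin a·(1/sin(π/2 − a − γ) + 1/sin(π/2 − a + γ)). -/
open Real

/-!
A ray leaving `(0, D)` at signed angle `b` from the downward vertical has direction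
`(sin b, -cos b)`. It satisfies the equation of the seabed at parameter `s` exactly when
`s * cos (b + γ) = D * cos γ`, so when `cos (b + γ) > 0` it meets the seabed at the single point
with abscissa `D * cos γ * sin b / cos (b + γ)` (`mem_seabed_ray_iff`). The two edge rays are
`b = a` and `b = -a`. Two seabed points with abscissae `x` and `y` are at distance
`|x - y| / cos γ` (`norm_seabed_sub`), and the factor `cos γ` cancels.
-/

/-- The point of the seabed line of slope `-tan γ` with abscissa `x`. -/
noncomputable def seabedPoint (γ x : ℝ) : EuclideanSpace ℝ (Fin 2) :=
  (WithLp.equiv 2 (Fin 2 → ℝ)).symm ![x, -x * Real.tan γ]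

/-- The ray at signed angle `b` from the downward vertical meets the seabed in exactly one point.
Only `cos (b + γ) > 0` matters, which covers the downhill and the uphill ray at once. -/
lemma mem_seabed_ray_iff {D b γ : ℝ} (hD : 0 < D) (hγ : 0 < cos γ) (hb : 0 < cos (b + γ))
    (T : EuclideanSpace ℝ (Fin 2)) :
    ((∃ x : ℝ, T = (WithLp.equiv 2 (Fin 2 → ℝ)).symm ![x, -x * Real.tan γ]) ∧
      ∃ s : ℝ, 0 ≤ s ∧ T = (WithLp.equiv 2 (Fin 2 → ℝ)).symm ![0, D] +
        s • (WithLp.equiv 2 (Fin 2 → ℝ)).symm ![sin b, -cos b]) ↔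
    T = seabedPoint γ (D * cos γ * sin b / cos (b + γ)) := by
  have hne := hb.ne'
  have hγ' := hγ.ne'
  constructor
  · rintro ⟨⟨x, rfl⟩, s, -, h⟩
    have h0 := congrArg (fun p : EuclideanSpace ℝ (Fin 2) => p 0) h
    have h1 := congrArg (fun p : EuclideanSpace ℝ (Fin 2) => p 1) h
    simp at h0 h1
    have hs : s * cos (b + γ) = D * cos γ := by
      rw [h0, tan_eq_sin_div_cos] at h1
      field_simp at h1
      rw [cos_add]
      linear_combination h1
    have hx : x = D * cos γ * sin b / cos (b + γ) := by
      rw [eq_div_iff hne, h0]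
      linear_combination sin b * hs
    rw [seabedPoint, ← hx]
  · rintro rfl
    refine ⟨⟨_, rfl⟩, D * cos γ / cos (b + γ), by positivity, ?_⟩
    ext i
    fin_cases i
    · simp [seabedPoint]
      ring
    · simp [seabedPoint, tan_eq_sin_div_cos]
      field_simp
      rw [cos_add]
      ring

lemma norm_seabed_sub {γ : ℝ} (hγ : 0 < cos γ) (x y : ℝ) :
    ‖seabedPoint γ x - seabedPoint γ y‖ = |x - y| / cos γ := by
  have h : (x - y) ^ 2 + (y * tan γ - x * tan γ) ^ 2 = ((x - y) / cos γ) ^ 2 := by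
    rw [tan_eq_sin_div_cos]
    field_simp
    linear_combination (x - y) ^ 2 * sin_sq_add_cos_sq γ
  rw [EuclideanSpace.norm_eq, ← abs_of_pos hγ, ← abs_div, ← sqrt_sq_eq_abs, ← h]
  congr 1
  simp [seabedPoint, Fin.sum_univ_two]
  ring

/-- The transducer is at `C = (0, D)` above the origin, the seabed is the line
`L = {(x, −x·tan γ)}`, and the two beam edge rays from `C` have directions
`(sin a, −cos a)` and `(−sin a, −cos a)`.  If `a + γ < π/2` then each edge ray meets `L`
in a unique point (`T` downhill, `U` uphill), and the coverage width is
`‖T − U‖ = D·sin a·(1/sin(π/2 − a − γ) + 1/sin(π/2 − a + γ))`. -/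
theorem stmt8 (D a γ : ℝ) (hD : 0 < D) (ha : a ∈ Set.Ioo 0 (π / 2))
    (hγ : γ ∈ Set.Ico 0 (π / 2)) (haγ : a + γ < π / 2)
    (C : EuclideanSpace ℝ (Fin 2)) (hC : C = (WithLp.equiv 2 (Fin 2 → ℝ)).symm ![0, D])
    (L : Set (EuclideanSpace ℝ (Fin 2)))
    (hL : L = {p | ∃ x : ℝ, p = (WithLp.equiv 2 (Fin 2 → ℝ)).symm ![x, -x * Real.tan γ]})
    (d₁ d₂ : EuclideanSpace ℝ (Fin 2))
    (hd₁ : d₁ = (WithLp.equiv 2 (Fin 2 → ℝ)).symm ![Real.sin a, -Real.cos a])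
    (hd₂ : d₂ = (WithLp.equiv 2 (Fin 2 → ℝ)).symm ![-Real.sin a, -Real.cos a]) :
    (∃! T, T ∈ L ∧ ∃ s : ℝ, 0 ≤ s ∧ T = C + s • d₁) ∧
    (∃! U, U ∈ L ∧ ∃ s : ℝ, 0 ≤ s ∧ U = C + s • d₂) ∧
    ∀ T U : EuclideanSpace ℝ (Fin 2),
      (T ∈ L ∧ ∃ s : ℝ, 0 ≤ s ∧ T = C + s • d₁) →
      (U ∈ L ∧ ∃ s : ℝ, 0 ≤ s ∧ U = C + s • d₂) →
      ‖T - U‖ = D * Real.sin a *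
        (1 / Real.sin (π / 2 - a - γ) + 1 / Real.sin (π / 2 - a + γ)) := by
  obtain ⟨ha0, ha1⟩ := ha
  obtain ⟨hγ0, hγ1⟩ := hγ
  have hc : 0 < cos γ := cos_pos_of_mem_Ioo ⟨by linarith, hγ1⟩
  have h1 : 0 < cos (a + γ) := cos_pos_of_mem_Ioo ⟨by linarith, haγ⟩
  have h2 : 0 < cos (-a + γ) := cos_pos_of_mem_Ioo ⟨by linarith, by linarith⟩
  have hs : 0 < sin a := sin_pos_of_pos_of_lt_pi ha0 (by linarith)
  -- The second edge ray is the ray at signed angle `-a`.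
  rw [← sin_neg, ← cos_neg a] at hd₂
  subst hC hL hd₁ hd₂
  simp only [Set.mem_ofPred_eq, mem_seabed_ray_iff hD hc h1, mem_seabed_ray_iff hD hc h2]
  refine ⟨⟨_, rfl, fun _ h => h⟩, ⟨_, rfl, fun _ h => h⟩, ?_⟩
  rintro T U rfl rfl
  have e : D * cos γ * sin a / cos (a + γ) - D * cos γ * sin (-a) / cos (-a + γ) =
      D * sin a * (1 / cos (a + γ) + 1 / cos (-a + γ)) * cos γ := by
    rw [sin_neg]
    ring
  rw [norm_seabed_sub hc, e, abs_of_pos (by positivity), mul_div_cancel_right₀ _ hc.ne',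
    show π / 2 - a - γ = π / 2 - (a + γ) by ring, sin_pi_div_two_sub,
    show π / 2 - a + γ = -a + γ + π / 2 by ring, sin_add_pi_div_two]
end

section
/- Let c, m > 0, K ∈ ℝ, η ∈ (0, 1), w(x) = c·(K − m·x), λ = (1 − η)·c·m/2 with 0 < λ < 1, and let (xₙ) satisfy xₙ₊₁ − xₙ = (1 − η)·(w(xₙ) + w(xₙ₊₁))/2 for all n. Then the consecutive spacings dₙ = xₙ₊₁ − xₙ form a geometric sequence with ratio (1 − λ)/(1 + λ): dₙ₊₁ = ((1 − λ)/(1 + λ))·dₙ for all n. In particular, if d₀ > 0 then the spacing between adjacent survey lines is strictly decreasing. -/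
/-- Under the overlap recursion `xₙ₊₁ − xₙ = (1 − η)·(w(xₙ) + w(xₙ₊₁))/2` with
`w(x) = c·(K − m·x)` and `λ = (1 − η)·c·m/2 ∈ (0, 1)`, the consecutive spacings
`dₙ = xₙ₊₁ − xₙ` form a geometric sequence with ratio `(1 − λ)/(1 + λ)`; in particular, if
`d₀ > 0` then the spacing between adjacent survey lines is strictly decreasing. -/
theorem stmt16 (c m K η : ℝ) (hc : 0 < c) (hm : 0 < m) (hη : η ∈ Set.Ioo (0 : ℝ) 1)
    (w : ℝ → ℝ) (hw : ∀ x, w x = c * (K - m * x))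
    (lam : ℝ) (hlam : lam = (1 - η) * c * m / 2) (hlam0 : 0 < lam) (hlam1 : lam < 1)
    (x : ℕ → ℝ)
    (hx : ∀ n : ℕ, x (n + 1) - x n = (1 - η) * (w (x n) + w (x (n + 1))) / 2)
    (d : ℕ → ℝ) (hd : ∀ n : ℕ, d n = x (n + 1) - x n) :
    (∀ n : ℕ, d (n + 1) = (1 - lam) / (1 + lam) * d n) ∧
    (0 < d 0 → ∀ n : ℕ, d (n + 1) < d n) := by
  have h1 : (0 : ℝ) < 1 + lam := by linarith
  have hgeom : ∀ n : ℕ, d (n + 1) = (1 - lam) / (1 + lam) * d n := by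
    intro n
    -- Subtracting consecutive recursions cancels `K` and leaves `dₙ₊₁ - dₙ = -λ (dₙ + dₙ₊₁)`.
    have key : d (n + 1) * (1 + lam) = (1 - lam) * d n := by
      have e0 := hx n
      have e1 := hx (n + 1)
      simp only [hw] at e0 e1
      rw [hd, hd, hlam]
      linear_combination e1 - e0
    rw [div_mul_eq_mul_div, eq_div_iff h1.ne']
    exact key
  refine ⟨hgeom, fun h0 n => ?_⟩
  have hpos : ∀ k : ℕ, 0 < d k := by
    intro k
    induction k with
    | zero => exact h0
    | succ k ih =>
      rw [hgeom]
      exact mul_pos (div_pos (by linarith) h1) ih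
  rw [hgeom]
  exact mul_lt_of_lt_one_left (hpos n) ((div_lt_one h1).2 (by linarith))
end
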